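/- The image of the group L_n under the homomorphism sig : O_n → (ℤ/(n−1))^× is exactly the subgroup of (ℤ/(n−1))^× generated by the residues modulo n−1 of the divisors of n. -/

import Mathlib

/-!
# The image of `L_n` under the signature

Write `N = n + 2` for the size of the alphabet and `μ` for the uniform Bernoulli measure on
one-sided sequences. A clopen set has measure in `ℤ[1/N]`, and the reduction
`ℤ[1/N] → ℤ/(N-1)` sends the measure of the image of `h_q` to `m_q` (`mq_cast`), because a
minimal cover by cylinders is disjoint and each cylinder has measure a power of `1/N`.

*The image lies in the subgroup.* The Lipschitz condition gives an annotation `α` of the states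
(`exists_annotation`), and the injectivity of the maps `h_q` makes `N ^ (-α q) μ(im h_q)` a
harmonic function of `q`; by the maximum principle it is constant (`mu_range_const`). It follows
that `h_q` multiplies the measure of every clopen set by `μ(im h_q)` (`mu_image`). Applied to
the preimage of a cylinder contained in the image of `h_q`, this shows that `μ(im h_q)` is a
unit of `ℤ[1/N]` (`exists_dvd_pow`), so that `m_q` is congruent to a product of prime divisors
of `N` (`mem_divGroup_of_dvd_pow`).

*Every element of the subgroup occurs.* Factor `N = ∏ p i` into primes and identify the alphabet
with `∏ i, Fin (p i)`. The transducer `delay` that delays the `i`-th coordinate by `a i` steps is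
synchronous, and the images of its maps `h_q` partition the space into `∏ p i ^ a i` sets of
equal measure, so its signature is the inverse of `∏ p i ^ a i` (`sigT_delay`). Every element
of the subgroup is such a product, since the group is finite, and some `a i` can be taken to be
zero, since `N ≡ 1` (`exists_exponents_zero`); then no state has incomplete response. The
inverse of the transducer in `O_n` delays the `i`-th coordinate by `max a - a i`
(`delay_mul`, `delay_Ln`).
-/

/-!
Common definitions: transducers over a finite alphabet, strong synchronization,
cores, ω-equivalence, minimal representatives, the monoids `M_n`, `SL_n`, `SO_n`,
the groups `O_n`, `L_n`, annotations, and the two-sided full shift.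

Throughout, the alphabet is `Fin (n + 2)`, i.e. an alphabet of size `n + 2 ≥ 2`.
-/

namespace ShiftPaper

/-- The alphabet with `n + 2` letters. -/
abbrev A (n : ℕ) : Type := Fin (n + 2)

/-- Finite words over the alphabet. -/
abbrev Word (n : ℕ) : Type := List (A n)

/-- A transducer over the alphabet `A n`: a finite nonempty set of states together with a
transition function `tr` and an output function `out` (possibly asynchronous). -/
structure Transducer (n : ℕ) where
  Q : Type
  fin : Finite Q
  ne : Nonempty Q
  tr : A n → Q → Q
  out : A n → Q → Word n

variable {n : ℕ}

instance (T : Transducer n) : Finite T.Q := T.fin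
instance (T : Transducer n) : Nonempty T.Q := T.ne

/-- Extended transition function, reading a finite word from left to right. -/
def dsts (T : Transducer n) : Word n → T.Q → T.Q
  | [], q => q
  | a :: w, q => dsts T w (T.tr a q)

/-- Extended output function along a finite word. -/
def outs (T : Transducer n) : Word n → T.Q → Word n
  | [], _ => []
  | a :: w, q => T.out a q ++ outs T w (T.tr a q)

/-- Every (nonempty) circuit in the transducer has nonempty output. -/
def CircuitsNonempty (T : Transducer n) : Prop :=
  ∀ (q : T.Q) (w : Word n), w ≠ [] → dsts T w q = q → outs T w q ≠ []

/-- `T` is synchronizing at level `k`: the state reached after reading any word of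
length `k` does not depend on the starting state. -/
def SyncAt (T : Transducer n) (k : ℕ) : Prop :=
  ∀ w : Word n, w.length = k → ∀ p q : T.Q, dsts T w p = dsts T w q

/-- `T` is strongly synchronizing: synchronizing at some level. -/
def StronglySync (T : Transducer n) : Prop := ∃ k, SyncAt T k

/-- The minimal synchronizing level (junk value `0` if `T` is not strongly synchronizing). -/
noncomputable def syncLevel (T : Transducer n) : ℕ := by
  classical
  exact if h : StronglySync T then Nat.find h else 0

/-- The infinite output stream produced from state `q` on reading the infinite input `x`
(the map `h_q`).  (Well defined on transducers all of whose circuits have nonempty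
output; junk values otherwise.) -/
noncomputable def hmap (T : Transducer n) (q : T.Q) (x : ℕ → A n) : ℕ → A n := fun m => by
  classical
  exact if h : ∃ k, m < (outs T ((List.range k).map x) q).length then
    (outs T ((List.range h.choose).map x) q).getD m default
  else default

/-- ω-equality of transducers: a bijection of the state sets under which corresponding
states induce the same maps on infinite sequences. -/
def OmegaEq (T U : Transducer n) : Prop :=
  ∃ f : T.Q ≃ U.Q, ∀ q, hmap T q = hmap U (f q)

/-- The setoid on states given by ω-equivalence of states. -/
def omegaSetoid (T : Transducer n) : Setoid T.Q :=
  ⟨fun p q => hmap T p = hmap T q, ⟨fun _ => rfl, fun h => h.symm, fun h h' => h.trans h'⟩⟩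

/-- The transducer obtained by identifying ω-equivalent states. -/
noncomputable def quotT (T : Transducer n) : Transducer n where
  Q := Quotient (omegaSetoid T)
  fin := Finite.of_surjective (Quotient.mk (omegaSetoid T))
    fun c => ⟨Quotient.out c, Quotient.out_eq c⟩
  ne := ⟨Quotient.mk (omegaSetoid T) (Classical.choice T.ne)⟩
  tr := fun a c => Quotient.mk (omegaSetoid T) (T.tr a (Quotient.out c))
  out := fun a c => T.out a (Quotient.out c)

/-- `q` is a state of the core of `T`: it is forced by some word whose length is a
synchronizing level of `T`. -/
def CoreState (T : Transducer n) (q : T.Q) : Prop :=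
  ∃ (k : ℕ) (w : Word n), SyncAt T k ∧ w.length = k ∧ ∀ p, dsts T w p = q

/-- `T` is core: it equals its core. -/
def IsCore (T : Transducer n) : Prop := ∀ q : T.Q, CoreState T q

/-- Auxiliary predicate used to make the core construction total. -/
def CoreStateE (T : Transducer n) (q : T.Q) : Prop :=
  CoreState T q ∨ ∀ p, ¬ CoreState T p

/-- The core of `T` (as a transducer). -/
noncomputable def coreT (T : Transducer n) : Transducer n where
  Q := {q : T.Q // CoreStateE T q}
  fin := Subtype.finite
  ne := by
    classical
    by_cases h : ∀ p, ¬ CoreState T p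
    · exact ⟨⟨Classical.choice T.ne, Or.inr h⟩⟩
    · push_neg at h
      obtain ⟨p, hp⟩ := h
      exact ⟨⟨p, Or.inl hp⟩⟩
  tr := fun a q => by
    classical
    exact if h : CoreStateE T (T.tr a q.1) then ⟨T.tr a q.1, h⟩ else q
  out := fun a q => T.out a q.1

/-- There exist two inputs whose outputs from `q` disagree at position `j`. -/
def Disagree (T : Transducer n) (q : T.Q) (j : ℕ) : Prop :=
  ∃ x y : ℕ → A n, hmap T q x j ≠ hmap T q y j

/-- The extent of incomplete response of `q` (the length of `Λ(ε,q)`) is finite. -/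
def FiniteExtent (T : Transducer n) (q : T.Q) : Prop := ∃ j, Disagree T q j

/-- The extent of incomplete response `|Λ(ε,q)|` of the state `q`
(junk value `0` when it is infinite). -/
noncomputable def extentLen (T : Transducer n) (q : T.Q) : ℕ := by
  classical
  exact if h : FiniteExtent T q then Nat.find h else 0

/-- The word `Λ(ε,q)`: the greatest common prefix of all outputs from `q`. -/
noncomputable def extentWord (T : Transducer n) (q : T.Q) : Word n :=
  (List.range (extentLen T q)).map (hmap T q fun _ => default)

/-- `T` has no states of incomplete response (`Λ(ε,q) = ε` for every state `q`). -/
def NoIncomplete (T : Transducer n) : Prop := ∀ q : T.Q, Disagree T q 0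

/-- No two distinct states of `T` are ω-equivalent. -/
def WeaklyMinimal (T : Transducer n) : Prop :=
  ∀ p q : T.Q, hmap T p = hmap T q → p = q

/-- The Lipschitz condition (SL3): around any circuit the output is as long as the input. -/
def SL3 (T : Transducer n) : Prop :=
  ∀ (q : T.Q) (Γ : Word n), dsts T Γ q = q → (outs T Γ q).length = Γ.length

/-- `T` is synchronous: it writes exactly one letter for each letter read. -/
def Synchronous (T : Transducer n) : Prop :=
  ∀ (a : A n) (q : T.Q), (T.out a q).length = 1

/-- Boolean lexicographic comparison of words. -/
def lexLtB : Word n → Word n → Bool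
  | [], [] => false
  | [], _ :: _ => true
  | _ :: _, [] => false
  | a :: u, b :: v => if a < b then true else if b < a then false else lexLtB u v

/-- The lexicographically least rotation of a word. -/
def minimalRot (w : Word n) : Word n :=
  ((List.range w.length).map fun i => w.rotate i).foldl
    (fun acc r => if lexLtB r acc then r else acc) w

/-- A nonempty word is prime if it is not a power of a strictly shorter word. -/
def IsPrime (w : Word n) : Prop :=
  w ≠ [] ∧ ∀ (u : Word n) (k : ℕ), w = (List.replicate k u).flatten → w.length ≤ u.length

/-- `v` is a rotation of `u`. -/
def RotEq (u v : Word n) : Prop := ∃ i : ℕ, v = u.rotate i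

/-- The prime word of which the (eventually constant single) image point of `T` is a power
(used for the degenerate transducers `Z_x`; junk values otherwise). -/
noncomputable def periodicRoot (T : Transducer n) : Word n := by
  classical
  exact
    if hp : ∃ m, 0 < m ∧ ∀ j, hmap T (Classical.choice T.ne) (fun _ => default) (j + m) =
        hmap T (Classical.choice T.ne) (fun _ => default) j
    then (List.range (Nat.find hp)).map (hmap T (Classical.choice T.ne) fun _ => default)
    else [default]

/-- Remove the incomplete response from the states of `T`: replace the output `λ(a,q)` by
`Λ(a,q) - Λ(ε,q)`.  (In the degenerate case where the extents of incomplete response are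
infinite, all outputs are replaced by the minimal rotation of the prime root of the unique
image point, so that minimising produces the transducer `Z_x` of the paper.) -/
noncomputable def removeIncomplete (T : Transducer n) : Transducer n where
  Q := T.Q
  fin := T.fin
  ne := T.ne
  tr := T.tr
  out := fun a q => by
    classical
    exact if ∀ p : T.Q, FiniteExtent T p then
      (T.out a q ++ extentWord T (T.tr a q)).drop (extentLen T q)
    else minimalRot (periodicRoot T)

/-- The minimal representative `[T]` of a strongly synchronizing core transducer `T`:
remove incomplete response, take the core, and identify ω-equivalent states. -/
noncomputable def minRep (T : Transducer n) : Transducer n :=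
  quotT (coreT (removeIncomplete T))

/-- The single state transducer `Z_x` which outputs `x` on every input letter. -/
def Zword (x : Word n) : Transducer n where
  Q := PUnit
  fin := inferInstance
  ne := ⟨PUnit.unit⟩
  tr := fun _ q => q
  out := fun _ _ => x

/-- The single state identity transducer. -/
def oneT : Transducer n where
  Q := PUnit
  fin := inferInstance
  ne := ⟨PUnit.unit⟩
  tr := fun _ q => q
  out := fun a _ => [a]

/-- The product transducer `T * U`: the outputs of `T` are processed by `U`. -/
noncomputable def prodT (T U : Transducer n) : Transducer n where
  Q := T.Q × U.Q
  fin := inferInstance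
  ne := ⟨⟨Classical.choice T.ne, Classical.choice U.ne⟩⟩
  tr := fun a p => (T.tr a p.1, dsts U (T.out a p.1) p.2)
  out := fun a p => outs U (T.out a p.1) p.2

/-- The product in `M_n`: the minimal representative of the core of `T * U`. -/
noncomputable def mulT (T U : Transducer n) : Transducer n :=
  minRep (coreT (prodT T U))

/-- Membership in the monoid `M_n` of minimal, strongly synchronizing, core transducers
(a transducer is minimal if it is core, has no states of incomplete response and no two
distinct ω-equivalent states, or it is one of the degenerate transducers `Z_x` for a prime
word `x` which is least in its rotation class). -/
def MnMem (T : Transducer n) : Prop :=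
  CircuitsNonempty T ∧ StronglySync T ∧ IsCore T ∧
    ((NoIncomplete T ∧ WeaklyMinimal T) ∨
      ∃ x : Word n, IsPrime x ∧ minimalRot x = x ∧ OmegaEq T (Zword x))

/-- Membership in the monoid `SL_n`: elements of `M_n` satisfying the Lipschitz condition. -/
def SLnMem (T : Transducer n) : Prop := MnMem T ∧ SL3 T

/-- Membership in the monoid `SO_n`: elements of `M_n` all of whose states induce injective
maps with clopen image. -/
def SOnMem (T : Transducer n) : Prop :=
  MnMem T ∧ ∀ q : T.Q, Function.Injective (hmap T q) ∧ IsClopen (Set.range (hmap T q))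

/-- Membership in the group `O_n`: invertible elements of `SO_n` (with inverse in `SO_n`);
equality in `M_n` is ω-equality. -/
def OnMem (T : Transducer n) : Prop :=
  SOnMem T ∧ ∃ U : Transducer n, SOnMem U ∧ OmegaEq (mulT T U) oneT ∧ OmegaEq (mulT U T) oneT

/-- Membership in the group `L_n = O_n ∩ SL_n`. -/
def LnMem (T : Transducer n) : Prop := OnMem T ∧ SL3 T

/-- Membership in the monoid `\widetilde{P}_n` of weakly minimal, synchronous, strongly
synchronizing core transducers. -/
def PtildeMem (T : Transducer n) : Prop :=
  CircuitsNonempty T ∧ StronglySync T ∧ IsCore T ∧ Synchronous T ∧ WeaklyMinimal T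

/-- The product in `\widetilde{P}_n`: take the product transducer, identify ω-equivalent
states and take the core. -/
noncomputable def ptildeMul (P R : Transducer n) : Transducer n :=
  coreT (quotT (prodT P R))

/-- An annotation of (a strongly synchronizing core transducer satisfying the Lipschitz
condition) `T`. -/
def Annotation (T : Transducer n) (α : T.Q → ℤ) : Prop :=
  ∀ (q : T.Q) (Γ : Word n),
    α (dsts T Γ q) = α q + ((outs T Γ q).length : ℤ) - (Γ.length : ℤ)

/-! ### The two-sided full shift -/

/-- The space of bi-infinite sequences over the alphabet `A n`. -/
abbrev FullShift (n : ℕ) : Type := ℤ → A n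

/-- The `i`-th power of the shift map: `(shiftZ i x) j = x (j - i)`.
The shift `σ` itself is `shiftZ 1`. -/
def shiftZ (i : ℤ) (x : FullShift n) : FullShift n := fun j => x (j - i)

/-- The monoid of endomorphisms of the shift dynamical system: continuous maps on the
space of bi-infinite sequences commuting with the shift. -/
def EndShift (n : ℕ) : Type :=
  {f : FullShift n → FullShift n // Continuous f ∧ ∀ x, f (shiftZ 1 x) = shiftZ 1 (f x)}

/-- The group of automorphisms of the shift dynamical system: homeomorphisms of the
space of bi-infinite sequences commuting with the shift. -/
def AutShift (n : ℕ) : Type :=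
  {f : FullShift n → FullShift n // Continuous f ∧ (∀ x, f (shiftZ 1 x) = shiftZ 1 (f x)) ∧
    ∃ g : FullShift n → FullShift n, Continuous g ∧ (∀ x, g (f x) = x) ∧ ∀ x, f (g x) = x}

/-- The window `x_{i-k} … x_{i-1}` of a bi-infinite sequence. -/
def window (x : FullShift n) (i : ℤ) (k : ℕ) : Word n :=
  (List.range k).map fun j => x (i - (k : ℤ) + (j : ℤ))

/-- The state of `L` forced by the window `x_{i-k} … x_{i-1}`. -/
noncomputable def forced (L : Transducer n) (k : ℕ) (x : FullShift n) (i : ℤ) : L.Q :=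
  dsts L (window x i k) (Classical.choice L.ne)

/-- The output word written while processing the letter `x i`. -/
noncomputable def outAt (L : Transducer n) (k : ℕ) (x : FullShift n) (i : ℤ) : Word n :=
  L.out (x i) (forced L k x i)

/-- The defining specification of the map `(L, α) : X_n^ℤ → X_n^ℤ` induced by an annotated
transducer: for each index `i`, with `q` the state forced by `x_{i-k} … x_{i-1}` and
`w = λ(x_i, q)`, the word `w` occupies the coordinates `i + α q, …, i + α q + |w| - 1`
of the image sequence `y`. -/
def SpecAt (L : Transducer n) (α : L.Q → ℤ) (k : ℕ) (x y : FullShift n) : Prop :=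
  ∀ (i : ℤ) (j : ℕ), j < (outAt L k x i).length →
    y (i + α (forced L k x i) + (j : ℤ)) = (outAt L k x i).getD j default

/-- The map `(L, α) : X_n^ℤ → X_n^ℤ` induced by an annotated transducer. -/
noncomputable def inducedMap (L : Transducer n) (α : L.Q → ℤ) (k : ℕ) :
    FullShift n → FullShift n := fun x m => by
  classical
  exact if h : ∃ p : ℤ × ℕ, p.2 < (outAt L k x p.1).length ∧
      p.1 + α (forced L k x p.1) + (p.2 : ℤ) = m then
    (outAt L k x h.choose.1).getD h.choose.2 default
  else default

/-- The map `κ` from the states of `T` to the states of its minimal representative. -/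
noncomputable def kappa (T : Transducer n) (q : T.Q) : (minRep T).Q := by
  classical
  exact Quotient.mk (omegaSetoid (coreT (removeIncomplete T)))
    (if h : CoreStateE (removeIncomplete T) q then
      (⟨q, h⟩ : (coreT (removeIncomplete T)).Q)
    else Classical.choice (coreT (removeIncomplete T)).ne)

/-- The annotation `\overline{α + β}` of the product `LM` in `SL_n`: its value at the
state `κ (s, t)` is `α s + β t + |Λ(ε, (s,t))|`, the extent of incomplete response being
computed in `core (L * M)`. -/
noncomputable def annProd (L M : Transducer n) (α : L.Q → ℤ) (β : M.Q → ℤ) :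
    (mulT L M).Q → ℤ := fun c =>
  α (Quotient.out c).1.1.1 + β (Quotient.out c).1.1.2 +
    (extentLen (coreT (prodT L M)) (Quotient.out c).1 : ℤ)

/-- The set `ASL_n` of annotated transducers: pairs of a transducer and an integer-valued
function on its states. -/
def ASLPair (n : ℕ) := Σ T : Transducer n, T.Q → ℤ

/-- Membership in `ASL_n`: either the transducer is in `SL_n` with no states of incomplete
response and the function is an annotation of it, or it is a degenerate `Z_a` for a letter
`a` (whose `annotation ∞` we model by allowing an arbitrary function). -/
def ASLMem (p : ASLPair n) : Prop :=
  (SLnMem p.1 ∧ NoIncomplete p.1 ∧ Annotation p.1 p.2) ∨ ∃ a : A n, OmegaEq p.1 (Zword [a])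

/-- Equality in `ASL_n`: ω-equality of the transducers matching up the annotations, with
the two elements possibly both being the degenerate `(Z_a, ∞)` for the same letter `a`. -/
def ASLEq (p q : ASLPair n) : Prop :=
  (∃ f : p.1.Q ≃ q.1.Q, (∀ s, hmap p.1 s = hmap q.1 (f s)) ∧ ∀ s, q.2 (f s) = p.2 s) ∨
    ∃ a : A n, OmegaEq p.1 (Zword [a]) ∧ OmegaEq q.1 (Zword [a])

/-- The product on `ASL_n`: `(L, α)(M, β) = (LM, \overline{α + β})`. -/
noncomputable def ASLmul (p q : ASLPair n) : ASLPair n :=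
  ⟨mulT p.1 q.1, annProd p.1 q.1 p.2 q.2⟩

/-- The identity `(1, 0)` of `ASL_n`. -/
def ASLone : ASLPair n := ⟨oneT, fun _ => 0⟩

/-- Membership in `AL_n`: annotated elements of `L_n`. -/
def ALMem (p : ASLPair n) : Prop := LnMem p.1 ∧ Annotation p.1 p.2

/-- The element `([P], α)` of `ASL_n` with `α ((q) κ) = i + |Λ(ε, q)|`, associated to the
endomorphism `σ^i ∘ f_P`. -/
noncomputable def phiPair (P : Transducer n) (i : ℤ) : ASLPair n :=
  ⟨minRep P, fun c => i + (extentLen P (Quotient.out c).1 : ℤ)⟩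

/-- The unique state at the base of a circuit labelled `Γ` (junk value if there is none). -/
noncomputable def qcirc (T : Transducer n) (Γ : Word n) : T.Q := by
  classical
  exact if h : ∃ q, dsts T Γ q = q then h.choose else Classical.choice T.ne

/-- The prime root of a word: the prime word of which `w` is a power
(junk value `w` if there is none). -/
noncomputable def primeRoot (w : Word n) : Word n := by
  classical
  exact if h : ∃ u : Word n, IsPrime u ∧ ∃ k, w = (List.replicate k u).flatten then h.choose
  else w

/-- The action of `T ∈ M_n` on (rotation classes of) prime words: `Γ` is sent to the prime
word of which `λ(Γ, q_Γ)` is a power, where `q_Γ` is the unique state with a circuit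
labelled `Γ` based at it. -/
noncomputable def PiAct (T : Transducer n) (Γ : Word n) : Word n :=
  primeRoot (outs T Γ (qcirc T Γ))

/-- The cylinder set of one-sided infinite sequences with prefix `ν`. -/
def Cyl (ν : Word n) : Set (ℕ → A n) :=
  {x | ∀ (j : ℕ) (h : j < ν.length), x j = ν.get ⟨j, h⟩}

/-- `m_q = |B(q)|`: the least cardinality of a finite set of words whose cylinders are
contained in, and together cover, the image of `h_q`. -/
noncomputable def mq (T : Transducer n) (q : T.Q) : ℕ :=
  sInf {m : ℕ | ∃ S : Finset (Word n), S.card = m ∧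
    (∀ ν ∈ S, Cyl ν ⊆ Set.range (hmap T q)) ∧
    (⋃ ν ∈ S, Cyl ν) = Set.range (hmap T q)}

/-- The signature homomorphism `sig : O_n → (ℤ/(n-1))^×`, as an element of `ℤ/(n-1)`
(for our alphabet of size `n + 2`, the modulus is `n + 1`). -/
noncomputable def sigT (T : Transducer n) : ZMod (n + 1) :=
  (mq T (Classical.choice T.ne) : ZMod (n + 1))



/-! ### Sequences, words and the maps `h_q` -/

/-- The sequence obtained by putting the letter `a` in front of `x`. -/
def scons (a : A n) (x : ℕ → A n) : ℕ → A n
  | 0 => a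
  | m + 1 => x m

/-- The sequence obtained by putting the word `w` in front of `x`. -/
def sapp : Word n → (ℕ → A n) → (ℕ → A n)
  | [], x => x
  | a :: w, x => scons a (sapp w x)

/-- The prefix of length `k` of the sequence `x`. -/
def pre (k : ℕ) (x : ℕ → A n) : Word n := (List.range k).map x

@[simp] lemma scons_zero (a : A n) (x : ℕ → A n) : scons a x 0 = a := rfl
@[simp] lemma scons_succ (a : A n) (x : ℕ → A n) (m : ℕ) : scons a x (m + 1) = x m := rfl

lemma scons_eta (x : ℕ → A n) : scons (x 0) (fun m => x (m + 1)) = x := by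
  funext m; cases m <;> rfl

lemma scons_inj {a b : A n} {x y : ℕ → A n} (h : scons a x = scons b y) : a = b ∧ x = y :=
  ⟨congrFun h 0, funext fun m => congrFun h (m + 1)⟩

lemma sapp_inj (w : Word n) : Function.Injective (sapp w) := by
  induction w with
  | nil => exact fun _ _ h => h
  | cons a w ih => exact fun _ _ h => ih (scons_inj h).2

lemma sapp_of_lt (w : Word n) (x : ℕ → A n) {m : ℕ} (h : m < w.length) :
    sapp w x m = w.getD m default := by
  induction w generalizing m with
  | nil => simp at h
  | cons a w ih =>
    cases m with
    | zero => rfl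
    | succ m =>
      simp only [List.length_cons, add_lt_add_iff_right] at h
      simpa [sapp] using ih h

lemma sapp_of_ge (w : Word n) (x : ℕ → A n) {m : ℕ} (h : w.length ≤ m) :
    sapp w x m = x (m - w.length) := by
  induction w generalizing m with
  | nil => rfl
  | cons a w ih =>
    cases m with
    | zero => simp at h
    | succ m =>
      simp only [List.length_cons, add_le_add_iff_right] at h
      simpa [sapp] using ih h

@[simp] lemma pre_length (k : ℕ) (x : ℕ → A n) : (pre k x).length = k := by simp [pre]

lemma pre_succ (k : ℕ) (x : ℕ → A n) :
    pre (k + 1) x = x 0 :: pre k (fun m => x (m + 1)) := by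
  simp [pre, List.range_succ_eq_map, Function.comp_def]

lemma pre_add (j k : ℕ) (x : ℕ → A n) :
    pre (j + k) x = pre j x ++ pre k (fun m => x (j + m)) := by
  simp [pre, List.range_add, Function.comp_def]

lemma dsts_append (T : Transducer n) (u v : Word n) (q : T.Q) :
    dsts T (u ++ v) q = dsts T v (dsts T u q) := by
  induction u generalizing q with
  | nil => rfl
  | cons a u ih => exact ih _

lemma outs_append (T : Transducer n) (u v : Word n) (q : T.Q) :
    outs T (u ++ v) q = outs T u q ++ outs T v (dsts T u q) := by
  induction u generalizing q with
  | nil => rfl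
  | cons a u ih => simp [outs, dsts, ih]

lemma hmap_eq (T : Transducer n) (q : T.Q) (x : ℕ → A n) {m k : ℕ}
    (h : m < (outs T (pre k x) q).length) :
    hmap T q x m = (outs T (pre k x) q).getD m default := by
  have key : ∀ i j : ℕ, i ≤ j → m < (outs T (pre i x) q).length →
      (outs T (pre j x) q).getD m default = (outs T (pre i x) q).getD m default := by
    intro i j hij hi
    obtain ⟨l, rfl⟩ := Nat.exists_eq_add_of_le hij
    rw [pre_add, outs_append, List.getD_append _ _ _ _ hi]
  have hex : ∃ k, m < (outs T (pre k x) q).length := ⟨k, h⟩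
  have e : hmap T q x m = (outs T (pre hex.choose x) q).getD m default := by
    unfold hmap; exact dif_pos hex
  rw [e]
  rcases le_total hex.choose k with hk | hk
  · exact (key _ _ hk hex.choose_spec).symm
  · exact key _ _ hk h

/-- The output from `q` grows without bound: by the pigeonhole principle every long enough
path contains a circuit. -/
lemma outs_unbounded {T : Transducer n} (hC : CircuitsNonempty T) (m : ℕ) (q : T.Q)
    (x : ℕ → A n) : ∃ k, m < (outs T (pre k x) q).length := by
  have step : ∀ (q : T.Q) (x : ℕ → A n), ∃ j, 0 < (outs T (pre j x) q).length := by
    intro q x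
    obtain ⟨i, j, hij, e⟩ :=
      Finite.exists_ne_map_eq_of_infinite (fun i : ℕ => dsts T (pre i x) q)
    wlog hlt : i < j generalizing i j
    · exact this j i hij.symm e.symm (by omega)
    obtain ⟨l, rfl⟩ := Nat.exists_eq_add_of_le hlt.le
    refine ⟨i + l, ?_⟩
    simp only [pre_add, dsts_append] at e
    have hne := hC _ (pre l fun m => x (i + m))
      (by intro h; have := congrArg List.length h; simp at this; omega) e.symm
    rw [pre_add, outs_append, List.length_append]
    have := List.length_pos_iff.2 hne
    omega
  induction m generalizing q x with
  | zero => exact step q x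
  | succ m ih =>
    obtain ⟨j, hj⟩ := step q x
    obtain ⟨k, hk⟩ := ih (dsts T (pre j x) q) (fun m => x (j + m))
    refine ⟨j + k, ?_⟩
    rw [pre_add, outs_append, List.length_append]
    omega

/-- The recursion `h_q(ax) = λ(a,q) h_{π(a,q)}(x)`, through which the maps `h_q` are
handled from here on. -/
lemma hmap_scons {T : Transducer n} (hC : CircuitsNonempty T) (q : T.Q) (a : A n)
    (x : ℕ → A n) : hmap T q (scons a x) = sapp (T.out a q) (hmap T (T.tr a q) x) := by
  funext m
  obtain ⟨k, hk⟩ := outs_unbounded hC m (T.tr a q) x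
  have e : outs T (pre (k + 1) (scons a x)) q = T.out a q ++ outs T (pre k x) (T.tr a q) := by
    rw [pre_succ]; rfl
  rw [hmap_eq T q (scons a x) (k := k + 1) (by rw [e, List.length_append]; omega), e]
  rcases lt_or_ge m (T.out a q).length with h | h
  · rw [List.getD_append _ _ _ _ h, sapp_of_lt _ _ h]
  · rw [List.getD_append_right _ _ _ _ h, sapp_of_ge _ _ h,
      hmap_eq T _ x (k := k) (by omega)]

/-! ### The uniform measure of clopen sets -/

/-- Membership in `R` depends on the first `k` letters only. -/
def Det (k : ℕ) (R : Set (ℕ → A n)) : Prop :=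
  ∀ x y : ℕ → A n, (∀ m < k, x m = y m) → x ∈ R → y ∈ R

/-- `R` is a finite union of cylinders, that is, a clopen set. -/
def Loc (R : Set (ℕ → A n)) : Prop := ∃ k, Det k R

lemma Det.mono {k l : ℕ} {R : Set (ℕ → A n)} (h : Det k R) (hkl : k ≤ l) : Det l R :=
  fun x y e hx => h x y (fun m hm => e m (hm.trans_le hkl)) hx

lemma Det.preimage {k : ℕ} {R : Set (ℕ → A n)} (h : Det (k + 1) R) (a : A n) :
    Det k (scons a ⁻¹' R) := by
  refine fun x y e hx => h (scons a x) (scons a y) (fun m hm => ?_) hx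
  cases m with
  | zero => rfl
  | succ m => exact e m (by omega)

lemma det_succ {k : ℕ} {R : Set (ℕ → A n)} (h : ∀ a, Det k (scons a ⁻¹' R)) :
    Det (k + 1) R := by
  intro x y e hx
  have h1 := h (x 0) (fun m => x (m + 1)) (fun m => y (m + 1)) (fun m hm => e _ (by omega))
    (by simpa only [Set.mem_preimage, scons_eta] using hx)
  rw [Set.mem_preimage, e 0 (by omega), scons_eta] at h1
  exact h1

lemma Det.empty_or_univ {R : Set (ℕ → A n)} (h : Det 0 R) : R = ∅ ∨ R = Set.univ := by
  rcases R.eq_empty_or_nonempty with h0 | ⟨x, hx⟩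
  · exact Or.inl h0
  · exact Or.inr (Set.eq_univ_of_forall fun y => h x y (by simp) hx)

lemma det_empty (k : ℕ) : Det k (∅ : Set (ℕ → A n)) := fun _ _ _ h => h
lemma det_univ (k : ℕ) : Det k (Set.univ : Set (ℕ → A n)) := fun _ _ _ _ => trivial

lemma Det.union {k : ℕ} {R S : Set (ℕ → A n)} (hR : Det k R) (hS : Det k S) :
    Det k (R ∪ S) := fun x y e h => h.imp (hR x y e) (hS x y e)

lemma Loc.union {R S : Set (ℕ → A n)} (hR : Loc R) (hS : Loc S) : Loc (R ∪ S) := by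
  obtain ⟨k, hk⟩ := hR
  obtain ⟨l, hl⟩ := hS
  exact ⟨max k l, (hk.mono (le_max_left _ _)).union (hl.mono (le_max_right _ _))⟩

lemma Loc.preimage {R : Set (ℕ → A n)} (h : Loc R) (a : A n) : Loc (scons a ⁻¹' R) := by
  obtain ⟨k, hk⟩ := h
  exact ⟨k, (hk.mono (Nat.le_succ k)).preimage a⟩

lemma preimage_scons_image (a b : A n) (R : Set (ℕ → A n)) :
    scons b ⁻¹' (scons a '' R) = if b = a then R else ∅ := by
  ext x
  constructor
  · rintro ⟨y, hy, e⟩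
    obtain ⟨rfl, rfl⟩ := scons_inj e
    simpa using hy
  · split_ifs with h
    · subst h; exact fun hx => ⟨x, hx, rfl⟩
    · exact fun hx => hx.elim

lemma Loc.scons_image {R : Set (ℕ → A n)} (h : Loc R) (a : A n) : Loc (scons a '' R) := by
  obtain ⟨k, hk⟩ := h
  refine ⟨k + 1, det_succ fun b => ?_⟩
  rw [preimage_scons_image]
  split_ifs
  · exact hk
  · exact det_empty k

lemma sapp_cons_image (a : A n) (w : Word n) (R : Set (ℕ → A n)) :
    sapp (a :: w) '' R = scons a '' (sapp w '' R) := by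
  rw [Set.image_image]; rfl

lemma sapp_nil_image (R : Set (ℕ → A n)) : sapp [] '' R = R := by
  ext x; simp [sapp]

lemma Loc.sapp_image {R : Set (ℕ → A n)} (h : Loc R) (w : Word n) : Loc (sapp w '' R) := by
  induction w with
  | nil => rwa [sapp_nil_image]
  | cons a w ih => rw [sapp_cons_image]; exact ih.scons_image a

lemma Loc.biUnion {ι : Type*} (s : Finset ι) (R : ι → Set (ℕ → A n)) (h : ∀ i ∈ s, Loc (R i)) :
    Loc (⋃ i ∈ s, R i) := by
  classical
  induction s using Finset.induction_on with
  | empty => simpa using ⟨0, det_empty 0⟩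
  | insert i s hi ih =>
    rw [Finset.set_biUnion_insert]
    exact (h i (Finset.mem_insert_self i s)).union
      (ih fun j hj => h j (Finset.mem_insert_of_mem hj))

/-- Compactness of the Cantor space: a clopen set is determined by finitely many letters. -/
lemma loc_of_isClopen {R : Set (ℕ → A n)} (h : IsClopen R) : Loc R := by
  have nb : ∀ S : Set (ℕ → A n), IsOpen S → ∀ x ∈ S, ∃ k, ∀ y, (∀ m < k, x m = y m) → y ∈ S := by
    intro S hS x hx
    obtain ⟨I, u, hu, hsub⟩ := isOpen_pi_iff.1 hS x hx
    refine ⟨I.sup id + 1, fun y hy => hsub fun i hi => ?_⟩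
    rw [← hy i (Nat.lt_succ_of_le (Finset.le_sup (f := id) hi))]
    exact (hu i hi).2
  have ex : ∀ x : ℕ → A n, ∃ k, ∀ y, (∀ m < k, x m = y m) → (x ∈ R ↔ y ∈ R) := by
    intro x
    by_cases hx : x ∈ R
    · obtain ⟨k, hk⟩ := nb R h.isOpen x hx
      exact ⟨k, fun y hy => by simp [hx, hk y hy]⟩
    · obtain ⟨k, hk⟩ := nb Rᶜ h.compl.isOpen x hx
      exact ⟨k, fun y hy => iff_of_false hx (hk y hy)⟩
  choose k hk using ex
  obtain ⟨t, -, ht⟩ := isCompact_univ.elim_nhds_subcover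
    (fun x : ℕ → A n => {y | ∀ m < k x, x m = y m}) (by
      intro x _
      have : {y : ℕ → A n | ∀ m < k x, x m = y m} =
          ⋂ m ∈ Finset.range (k x), (fun y : ℕ → A n => y m) ⁻¹' {x m} := by
        ext y; simp [eq_comm]
      rw [this]
      refine IsOpen.mem_nhds (isOpen_biInter_finset fun m _ => ?_) (by simp)
      exact (isOpen_discrete _).preimage (continuous_apply m))
  refine ⟨t.sup k, fun x y e hx => ?_⟩
  obtain ⟨z, hz, hzx⟩ := Set.mem_iUnion₂.1 (ht (Set.mem_univ x))
  have hle : k z ≤ t.sup k := Finset.le_sup hz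
  exact (hk z y fun m hm => (hzx m hm).trans (e m (hm.trans_le hle))).1
    ((hk z x hzx).2 hx)

open Classical in
/-- The proportion of words of length `k` whose extension by the constant default sequence
lies in `R`. -/
noncomputable def dens : ℕ → Set (ℕ → A n) → ℚ
  | 0, R => if default ∈ R then 1 else 0
  | k + 1, R => (∑ a : A n, dens k (scons a ⁻¹' R)) / (n + 2 : ℚ)

open Classical in
/-- The uniform Bernoulli measure of a clopen set, as a rational number (junk value `0` on
sets that are not clopen). -/
noncomputable def mu (R : Set (ℕ → A n)) : ℚ :=
  if h : ∃ k, Det k R then dens h.choose R else 0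

lemma size_ne_zero (n : ℕ) : (n + 2 : ℚ) ≠ 0 := by positivity

lemma dens_empty (k : ℕ) : dens k (∅ : Set (ℕ → A n)) = 0 := by
  induction k with
  | zero => simp [dens]
  | succ k ih => simp [dens, ih]

lemma dens_univ (k : ℕ) : dens k (Set.univ : Set (ℕ → A n)) = 1 := by
  induction k with
  | zero => simp [dens]
  | succ k ih => simp [dens, ih, div_self (size_ne_zero n)]

lemma dens_succ {k : ℕ} {R : Set (ℕ → A n)} (h : Det k R) : dens (k + 1) R = dens k R := by
  induction k generalizing R with
  | zero => rcases h.empty_or_univ with rfl | rfl <;> simp only [dens_empty, dens_univ]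
  | succ k ih =>
    rw [dens, dens]
    simp only [ih (h.preimage _)]

lemma dens_of_le {k l : ℕ} {R : Set (ℕ → A n)} (h : Det k R) (hkl : k ≤ l) :
    dens l R = dens k R := by
  induction l, hkl using Nat.le_induction with
  | base => rfl
  | succ l hl ih => rw [dens_succ (h.mono hl), ih]

lemma mu_eq {k : ℕ} {R : Set (ℕ → A n)} (h : Det k R) : mu R = dens k R := by
  have hex : ∃ k, Det k R := ⟨k, h⟩
  have e : mu R = dens hex.choose R := dif_pos hex
  rw [e]
  rcases le_total hex.choose k with hk | hk
  · exact (dens_of_le hex.choose_spec hk).symm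
  · exact dens_of_le h hk

lemma mu_empty : mu (∅ : Set (ℕ → A n)) = 0 := by rw [mu_eq (det_empty 0), dens_empty]
lemma mu_univ : mu (Set.univ : Set (ℕ → A n)) = 1 := by rw [mu_eq (det_univ 0), dens_univ]

lemma mu_step {R : Set (ℕ → A n)} (h : Loc R) :
    mu R = (∑ a : A n, mu (scons a ⁻¹' R)) / (n + 2 : ℚ) := by
  obtain ⟨k, hk⟩ := h
  have hk' := hk.mono (Nat.le_succ k)
  rw [mu_eq hk', dens]
  simp only [mu_eq (hk'.preimage _)]

lemma dens_union (k : ℕ) {R S : Set (ℕ → A n)} (h : Disjoint R S) :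
    dens k (R ∪ S) = dens k R + dens k S := by
  induction k generalizing R S with
  | zero =>
    by_cases hR : (default : ℕ → A n) ∈ R
    · simp only [dens, if_pos (Set.mem_union_left S hR), if_pos hR,
        if_neg (Set.disjoint_left.1 h hR), add_zero]
    · by_cases hS : (default : ℕ → A n) ∈ S
      · simp only [dens, if_pos (Set.mem_union_right R hS), if_neg hR, if_pos hS, zero_add]
      · have hRS : (default : ℕ → A n) ∉ R ∪ S := fun h => h.elim hR hS
        simp only [dens, if_neg hRS, if_neg hR, if_neg hS, zero_add]
  | succ k ih =>
    simp only [dens, Set.preimage_union]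
    rw [← add_div, ← Finset.sum_add_distrib]
    simp only [ih (h.preimage _)]

lemma mu_union {R S : Set (ℕ → A n)} (hR : Loc R) (hS : Loc S) (h : Disjoint R S) :
    mu (R ∪ S) = mu R + mu S := by
  obtain ⟨k, hk⟩ := hR
  obtain ⟨l, hl⟩ := hS
  have hk := hk.mono (le_max_left k l)
  have hl := hl.mono (le_max_right k l)
  rw [mu_eq hk, mu_eq hl, mu_eq (hk.union hl), dens_union _ h]

lemma mu_biUnion {ι : Type*} (s : Finset ι) (R : ι → Set (ℕ → A n)) (h : ∀ i ∈ s, Loc (R i))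
    (hd : ∀ i ∈ s, ∀ j ∈ s, i ≠ j → Disjoint (R i) (R j)) :
    mu (⋃ i ∈ s, R i) = ∑ i ∈ s, mu (R i) := by
  classical
  induction s using Finset.induction_on with
  | empty => simpa using mu_empty
  | insert i s hi ih =>
    rw [Finset.set_biUnion_insert, Finset.sum_insert hi, mu_union, ih]
    · exact fun j hj => h j (Finset.mem_insert_of_mem hj)
    · exact fun j hj l hl => hd j (Finset.mem_insert_of_mem hj) l (Finset.mem_insert_of_mem hl)
    · exact h i (Finset.mem_insert_self i s)
    · exact Loc.biUnion s R fun j hj => h j (Finset.mem_insert_of_mem hj)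
    · refine Set.disjoint_iUnion₂_right.2 fun j hj => ?_
      refine hd i (Finset.mem_insert_self i s) j (Finset.mem_insert_of_mem hj) ?_
      rintro rfl
      exact hi hj

lemma mu_sapp_image {R : Set (ℕ → A n)} (h : Loc R) (w : Word n) :
    mu (sapp w '' R) = mu R / (n + 2 : ℚ) ^ w.length := by
  induction w with
  | nil => simp [sapp_nil_image]
  | cons a w ih =>
    rw [sapp_cons_image, mu_step ((h.sapp_image w).scons_image a)]
    simp only [preimage_scons_image, apply_ite mu, mu_empty]
    rw [Finset.sum_ite_eq' Finset.univ a, if_pos (Finset.mem_univ a), ih, List.length_cons,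
      pow_succ, div_div]

lemma mu_integral {k : ℕ} {R : Set (ℕ → A n)} (h : Det k R) :
    ∃ c : ℕ, (c : ℚ) = mu R * (n + 2 : ℚ) ^ k := by
  rw [mu_eq h]
  clear h
  induction k generalizing R with
  | zero =>
    rw [dens]
    split_ifs
    · exact ⟨1, by simp⟩
    · exact ⟨0, by simp⟩
  | succ k ih =>
    choose c hc using fun a : A n => @ih (scons a ⁻¹' R)
    refine ⟨∑ a, c a, ?_⟩
    rw [dens, pow_succ]
    push_cast
    simp only [hc]
    rw [← Finset.sum_mul]
    field_simp [size_ne_zero n]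

lemma cyl_eq (ν : Word n) : Cyl ν = sapp ν '' Set.univ := by
  ext x
  simp only [Cyl, Set.mem_ofPred_eq, Set.image_univ, Set.mem_range]
  constructor
  · intro h
    refine ⟨fun m => x (ν.length + m), funext fun m => ?_⟩
    rcases lt_or_ge m ν.length with hm | hm
    · rw [sapp_of_lt _ _ hm, h m hm, List.getD_eq_getElem _ _ hm]; rfl
    · rw [sapp_of_ge _ _ hm]; congr 1; omega
  · rintro ⟨y, rfl⟩ j hj
    rw [sapp_of_lt _ _ hj, List.getD_eq_getElem _ _ hj]; rfl

lemma loc_cyl (ν : Word n) : Loc (Cyl ν) := by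
  rw [cyl_eq]; exact Loc.sapp_image ⟨0, det_univ 0⟩ ν

lemma mu_cyl (ν : Word n) : mu (Cyl ν) = 1 / (n + 2 : ℚ) ^ ν.length := by
  rw [cyl_eq, mu_sapp_image ⟨0, det_univ 0⟩, mu_univ]

lemma cyl_subset_of_meet {ν ν' : Word n} (hl : ν.length ≤ ν'.length) {z : ℕ → A n}
    (hz : z ∈ Cyl ν) (hz' : z ∈ Cyl ν') : Cyl ν' ⊆ Cyl ν := by
  intro x hx j hj
  rw [hx j (hj.trans_le hl), ← hz' j (hj.trans_le hl), hz j hj]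

lemma mem_cyl_pre (k : ℕ) (x : ℕ → A n) : x ∈ Cyl (pre k x) := by
  intro j hj
  simp [pre]

lemma size_eq_one (n : ℕ) : ((n : ZMod (n + 1)) + 2) = 1 := by
  have := ZMod.natCast_self (n + 1)
  push_cast at this
  linear_combination this

/-- A cover of the image of `h_q` by cylinders with `m_q` members is an antichain, so the
measure of the image is a sum of `m_q` negative powers of the alphabet size `n + 2`, and
`n + 2 ≡ 1` modulo `n + 1`. -/
lemma mq_cast {T : Transducer n} {q : T.Q} (h : Loc (Set.range (hmap T q))) {c k : ℕ}
    (hc : (c : ℚ) = mu (Set.range (hmap T q)) * (n + 2 : ℚ) ^ k) :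
    (mq T q : ZMod (n + 1)) = c := by
  classical
  set R := Set.range (hmap T q) with hR
  set M := {m : ℕ | ∃ S : Finset (Word n), S.card = m ∧ (∀ ν ∈ S, Cyl ν ⊆ R) ∧
    (⋃ ν ∈ S, Cyl ν) = R} with hM
  have hne : M.Nonempty := by
    obtain ⟨l, hl⟩ := h
    have hfin : {ν : Word n | ν.length = l ∧ Cyl ν ⊆ R}.Finite :=
      (List.finite_length_eq (A n) l).subset fun ν hν => hν.1
    refine ⟨_, hfin.toFinset, rfl, fun ν hν => ((hfin.mem_toFinset).1 hν).2,
      Set.Subset.antisymm (Set.iUnion₂_subset fun ν hν => ((hfin.mem_toFinset).1 hν).2) ?_⟩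
    intro x hx
    refine Set.mem_iUnion₂.2 ⟨pre l x, (hfin.mem_toFinset).2 ⟨pre_length l x, ?_⟩,
      mem_cyl_pre l x⟩
    refine fun y hy => hl x y (fun m hm => ?_) hx
    have h1 := mem_cyl_pre l x m (by simpa using hm)
    rw [h1, hy m (by simpa using hm)]
  obtain ⟨S, hcard, hsub, hcov⟩ := Nat.sInf_mem hne
  have hmin : ∀ m ∈ M, S.card ≤ m := fun m hm => hcard ▸ Nat.sInf_le hm
  have hmq : mq T q = S.card := hcard.symm
  -- If two cylinders of a minimal cover met, one would contain the other, which could be dropped.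
  have anti : ∀ ν ∈ S, ∀ ν' ∈ S, ν.length ≤ ν'.length → ν ≠ ν' → Disjoint (Cyl ν) (Cyl ν') := by
    intro ν hν ν' hν' hl hne
    rw [Set.disjoint_left]
    intro z hz hz'
    have hss := cyl_subset_of_meet hl hz hz'
    have hmem : (S.erase ν').card ∈ M := by
      refine ⟨S.erase ν', rfl, fun μ hμ => hsub μ (Finset.mem_of_mem_erase hμ), ?_⟩
      rw [← hcov]
      apply Set.Subset.antisymm
      · exact Set.iUnion₂_subset fun μ hμ x hx =>
          Set.mem_iUnion₂.2 ⟨μ, Finset.mem_of_mem_erase hμ, hx⟩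
      · refine Set.iUnion₂_subset fun μ hμ x hx => ?_
        by_cases e : μ = ν'
        · exact Set.mem_iUnion₂.2 ⟨ν, Finset.mem_erase.2 ⟨hne, hν⟩, hss (e ▸ hx)⟩
        · exact Set.mem_iUnion₂.2 ⟨μ, Finset.mem_erase.2 ⟨e, hμ⟩, hx⟩
    have h1 := hmin _ hmem
    have h2 := Finset.card_erase_lt_of_mem hν'
    omega
  have hmu : mu R = ∑ ν ∈ S, 1 / (n + 2 : ℚ) ^ ν.length := by
    rw [← hcov, mu_biUnion S _ (fun ν _ => loc_cyl ν)]
    · exact Finset.sum_congr rfl fun ν _ => mu_cyl ν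
    · intro ν hν ν' hν' hne
      rcases le_total ν.length ν'.length with hl | hl
      · exact anti ν hν ν' hν' hl hne
      · exact (anti ν' hν' ν hν hl hne.symm).symm
  set K := S.sup List.length
  have hle : ∀ ν ∈ S, ν.length ≤ K := fun ν hν => Finset.le_sup hν
  have hnat : c * (n + 2) ^ K = (∑ ν ∈ S, (n + 2) ^ (K - ν.length)) * (n + 2) ^ k := by
    have : ((c * (n + 2) ^ K : ℕ) : ℚ) =
        (((∑ ν ∈ S, (n + 2) ^ (K - ν.length)) * (n + 2) ^ k : ℕ) : ℚ) := by
      push_cast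
      rw [hc, hmu, mul_right_comm, Finset.sum_mul]
      congr 1
      refine Finset.sum_congr rfl fun ν hν => ?_
      rw [one_div, pow_sub₀ _ (size_ne_zero n) (hle ν hν), mul_comm]
    exact_mod_cast this
  have h1 := size_eq_one n
  have := congrArg (Nat.cast : ℕ → ZMod (n + 1)) hnat
  push_cast at this
  simp only [h1, one_pow, mul_one, Finset.sum_const, nsmul_eq_mul] at this
  rw [this, hmq]

/-! ### Transducers satisfying the Lipschitz condition scale the measure -/

lemma exists_path {T : Transducer n} (h : IsCore T) (p q : T.Q) : ∃ w, dsts T w p = q := by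
  obtain ⟨k, w, -, -, hw⟩ := h q
  exact ⟨w, hw p⟩

/-- Measuring the excess of input over output along a path to a fixed base state gives an
annotation, which does not depend on the path by the Lipschitz condition. -/
lemma exists_annotation {T : Transducer n} (h : IsCore T) (hL : SL3 T) :
    ∃ α : T.Q → ℤ, ∀ a q, α (T.tr a q) = α q + (T.out a q).length - 1 := by
  obtain ⟨q₀⟩ := T.ne
  choose v hv using fun p => exists_path h p q₀
  refine ⟨fun p => (v p).length - (outs T (v p) p).length, fun a p => ?_⟩
  obtain ⟨w, hw⟩ := exists_path h q₀ p
  have h1 := hL q₀ (w ++ v p) (by rw [dsts_append, hw, hv])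
  have h2 := hL q₀ (w ++ a :: v (T.tr a p)) (by rw [dsts_append, hw]; exact hv _)
  rw [outs_append, hw] at h1 h2
  simp only [outs, List.length_append, List.length_cons] at h1 h2
  push_cast
  omega

lemma hmap_image {T : Transducer n} (hC : CircuitsNonempty T) (q : T.Q) (E : Set (ℕ → A n)) :
    hmap T q '' E = ⋃ a ∈ (Finset.univ : Finset (A n)),
      sapp (T.out a q) '' (hmap T (T.tr a q) '' (scons a ⁻¹' E)) := by
  ext y
  simp only [Finset.mem_univ, Set.iUnion_true, Set.mem_iUnion]
  constructor
  · rintro ⟨x, hx, rfl⟩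
    refine ⟨x 0, _, ⟨fun m => x (m + 1), by simpa [scons_eta] using hx, rfl⟩, ?_⟩
    rw [← hmap_scons hC, scons_eta]
  · rintro ⟨a, _, ⟨x, hx, rfl⟩, rfl⟩
    exact ⟨scons a x, hx, hmap_scons hC q a x⟩

lemma mu_hmap_image {T : Transducer n} (hC : CircuitsNonempty T)
    (inj : ∀ q, Function.Injective (hmap T q)) (q : T.Q) (E : Set (ℕ → A n))
    (hE : ∀ a, Loc (hmap T (T.tr a q) '' (scons a ⁻¹' E))) :
    Loc (hmap T q '' E) ∧ mu (hmap T q '' E) =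
      ∑ a, mu (hmap T (T.tr a q) '' (scons a ⁻¹' E)) / (n + 2 : ℚ) ^ (T.out a q).length := by
  rw [hmap_image hC]
  refine ⟨Loc.biUnion _ _ fun a _ => (hE a).sapp_image _, ?_⟩
  rw [mu_biUnion _ _ fun a _ => (hE a).sapp_image _]
  · exact Finset.sum_congr rfl fun a _ => mu_sapp_image (hE a) _
  · intro a _ b _ hab
    rw [Set.disjoint_left]
    rintro _ ⟨_, ⟨x, -, rfl⟩, rfl⟩ ⟨_, ⟨y, -, rfl⟩, e⟩
    rw [← hmap_scons hC, ← hmap_scons hC] at e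
    exact hab (scons_inj (inj q e)).1.symm

/-- After rescaling by the annotation, the measure of the image of `h_q` is a harmonic
function of the state `q`, hence constant by the maximum principle on the strongly connected
graph underlying `T`. -/
lemma mu_range_const {T : Transducer n} (hC : CircuitsNonempty T) (hK : IsCore T)
    (inj : ∀ q, Function.Injective (hmap T q)) (loc : ∀ q, Loc (Set.range (hmap T q)))
    {α : T.Q → ℤ} (hα : ∀ a q, α (T.tr a q) = α q + (T.out a q).length - 1) (p q : T.Q) :
    mu (Set.range (hmap T p)) * (n + 2 : ℚ) ^ (-α p) =
      mu (Set.range (hmap T q)) * (n + 2 : ℚ) ^ (-α q) := by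
  set f : T.Q → ℚ := fun q => mu (Set.range (hmap T q)) * (n + 2 : ℚ) ^ (-α q) with hf
  have harm : ∀ q, f q * (n + 2 : ℚ) = ∑ a, f (T.tr a q) := by
    intro q
    have h1 := (mu_hmap_image hC inj q Set.univ (fun a => by simpa using loc _)).2
    simp only [Set.image_univ, Set.preimage_univ] at h1
    simp only [hf]
    rw [h1, Finset.sum_mul, Finset.sum_mul]
    refine Finset.sum_congr rfl fun a _ => ?_
    have e : -α (T.tr a q) = -α q + 1 - ((T.out a q).length : ℤ) := by rw [hα]; ring
    rw [e, zpow_sub₀ (size_ne_zero n), zpow_add₀ (size_ne_zero n), zpow_natCast, zpow_one]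
    ring
  obtain ⟨q₀, hq₀⟩ := Finite.exists_max f
  have step : ∀ q a, f q = f q₀ → f (T.tr a q) = f q₀ := by
    intro q a hq
    have h0 : ∑ a, (f q₀ - f (T.tr a q)) = 0 := by
      rw [Finset.sum_sub_distrib, ← harm, hq]
      simp
      ring
    have := (Finset.sum_eq_zero_iff_of_nonneg fun a _ => sub_nonneg.2 (hq₀ (T.tr a q))).1 h0 a
      (Finset.mem_univ a)
    linarith
  have path : ∀ (w : Word n) q, f q = f q₀ → f (dsts T w q) = f q₀ := by
    intro w
    induction w with
    | nil => exact fun q h => h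
    | cons a w ih => exact fun q h => ih _ (step q a h)
  have all : ∀ q, f q = f q₀ := by
    intro q
    obtain ⟨w, hw⟩ := exists_path hK q₀ q
    rw [← hw]
    exact path w q₀ rfl
  exact (all p).trans (all q).symm

/-- `h_q` multiplies the measure by the constant `μ(im h_q)`. -/
lemma mu_image {T : Transducer n} (hC : CircuitsNonempty T) (hK : IsCore T)
    (inj : ∀ q, Function.Injective (hmap T q)) (loc : ∀ q, Loc (Set.range (hmap T q)))
    {α : T.Q → ℤ} (hα : ∀ a q, α (T.tr a q) = α q + (T.out a q).length - 1)
    {k : ℕ} {E : Set (ℕ → A n)} (hE : Det k E) (q : T.Q) :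
    Loc (hmap T q '' E) ∧ mu (hmap T q '' E) = mu E * mu (Set.range (hmap T q)) := by
  induction k generalizing E q with
  | zero =>
    rcases hE.empty_or_univ with rfl | rfl
    · simpa [mu_empty] using ⟨0, det_empty 0⟩
    · simpa [mu_univ] using loc q
  | succ k ih =>
    obtain ⟨h1, h2⟩ := mu_hmap_image hC inj q E (fun a => (ih (hE.preimage a) _).1)
    refine ⟨h1, ?_⟩
    rw [h2, mu_step ⟨_, hE⟩, Finset.sum_div, Finset.sum_mul]
    refine Finset.sum_congr rfl fun a _ => ?_
    rw [(ih (hE.preimage a) _).2]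
    have h3 := mu_range_const hC hK inj loc hα (T.tr a q) q
    have e : -α (T.tr a q) = -α q + 1 - ((T.out a q).length : ℤ) := by rw [hα]; ring
    have hz : (n + 2 : ℚ) ^ (-α q) ≠ 0 := zpow_ne_zero _ (size_ne_zero n)
    rw [e, zpow_sub₀ (size_ne_zero n), zpow_add₀ (size_ne_zero n), zpow_natCast, zpow_one] at h3
    have h4 : mu (Set.range (hmap T (T.tr a q))) / (n + 2 : ℚ) ^ (T.out a q).length =
        mu (Set.range (hmap T q)) / (n + 2 : ℚ) := by
      rw [eq_div_iff (size_ne_zero n)]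
      apply mul_right_cancel₀ hz
      rw [← h3]
      ring
    rw [mul_div_assoc, h4]
    ring

lemma loc_preimage_hmap {T : Transducer n} (hC : CircuitsNonempty T) (q : T.Q)
    {R : Set (ℕ → A n)} (hR : IsClopen R) : Loc (hmap T q ⁻¹' R) := by
  refine loc_of_isClopen (hR.preimage (continuous_pi fun m => ?_))
  rw [continuous_iff_continuousAt]
  intro x
  obtain ⟨k, hk⟩ := outs_unbounded hC m q x
  refine ContinuousAt.congr (f := fun _ => hmap T q x m) continuousAt_const ?_
  have : ⋂ i ∈ Finset.range k, (fun y : ℕ → A n => y i) ⁻¹' {x i} ∈ nhds x := by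
    refine IsOpen.mem_nhds (isOpen_biInter_finset fun i _ => ?_) (by simp)
    exact (isOpen_discrete _).preimage (continuous_apply i)
  filter_upwards [this] with y hy
  have e : pre k y = pre k x := by
    refine List.map_congr_left fun i hi => ?_
    have := Set.mem_iInter₂.1 hy i (by simpa using hi)
    exact this
  rw [hmap_eq T q x hk, hmap_eq T q y (k := k) (by rwa [e]), e]

/-- The measure of the image of `h_q` is a unit of `ℤ[1/N]`, where `N = n + 2`: if the image
contains a cylinder of measure `N ^ (-k)` with preimage `E`, then `μ(E) μ(im h_q) = N ^ (-k)`. -/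
lemma exists_dvd_pow {T : Transducer n} (hT : LnMem T) (q : T.Q) :
    ∃ c j : ℕ, c ∣ (n + 2) ^ j ∧ (mq T q : ZMod (n + 1)) = c := by
  obtain ⟨⟨⟨⟨hC, -, hK, -⟩, hSO⟩, -⟩, hL⟩ := hT
  have inj := fun q => (hSO q).1
  have loc := fun q => loc_of_isClopen (hSO q).2
  obtain ⟨α, hα⟩ := exists_annotation hK hL
  obtain ⟨k, hk⟩ := loc q
  obtain ⟨c, hc⟩ := mu_integral hk
  let x : ℕ → A n := hmap T q default
  set ν := pre k x with hν
  have hsub : Cyl ν ⊆ Set.range (hmap T q) := by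
    refine fun y hy => hk x y (fun m hm => ?_) ⟨default, rfl⟩
    rw [mem_cyl_pre k x m (by simpa using hm), hy m (by simpa [hν] using hm)]
  have hclopen : IsClopen (Cyl ν) := by
    have : Cyl ν = ⋂ i ∈ Finset.range k, (fun y : ℕ → A n => y i) ⁻¹' {x i} := by
      ext y
      simp [Cyl, hν, pre]
    rw [this]
    exact isClopen_biInter_finset fun i _ =>
      (isClopen_discrete _).preimage (continuous_apply i)
  obtain ⟨l, hl⟩ := loc_preimage_hmap hC q hclopen
  obtain ⟨d, hd⟩ := mu_integral hl
  have h1 := (mu_image hC hK inj loc hα hl q).2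
  rw [Set.image_preimage_eq_of_subset hsub, mu_cyl, hν, pre_length] at h1
  refine ⟨c, l, ⟨d, ?_⟩, mq_cast ⟨k, hk⟩ hc⟩
  have hp : (n + 2 : ℚ) ^ k ≠ 0 := pow_ne_zero _ (size_ne_zero n)
  have : (((n + 2) ^ l : ℕ) : ℚ) = ((c * d : ℕ) : ℚ) := by
    push_cast
    rw [hc, hd]
    rw [div_eq_iff hp] at h1
    linear_combination (n + 2 : ℚ) ^ l * h1
  exact_mod_cast this

/-! ### The subgroup generated by the divisors -/

/-- The subgroup of `(ℤ/(n+1))ˣ` generated by the divisors of `n + 2`. -/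
def divGroup (n : ℕ) : Subgroup (ZMod (n + 1))ˣ :=
  Subgroup.closure {u : (ZMod (n + 1))ˣ | ∃ d : ℕ, d ∣ (n + 2) ∧ (u : ZMod (n + 1)) = (d : ℕ)}

lemma mem_divGroup_of_dvd_pow (c : ℕ) : ∀ j : ℕ, c ∣ (n + 2) ^ j →
    ∃ u ∈ divGroup n, (u : ZMod (n + 1)) = c := by
  induction c using induction_on_primes with
  | zero =>
    intro j h
    have := pow_ne_zero j (show n + 2 ≠ 0 by omega)
    exact absurd (zero_dvd_iff.1 h) this
  | one => exact fun _ _ => ⟨1, one_mem _, by simp⟩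
  | prime_mul p a hp ih =>
    intro j h
    obtain ⟨u, hu, e⟩ := ih j ((Dvd.intro_left p rfl).trans h)
    have hpn : p ∣ n + 2 := (Nat.Prime.prime hp).dvd_of_dvd_pow ((Dvd.intro a rfl).trans h)
    have hcop : Nat.Coprime p (n + 1) :=
      Nat.Coprime.coprime_dvd_left hpn (by simp [show n + 2 = 1 + (n + 1) by omega])
    refine ⟨ZMod.unitOfCoprime p hcop * u,
      mul_mem (Subgroup.subset_closure ⟨p, hpn, by simp⟩) hu, ?_⟩
    push_cast
    rw [e, ZMod.coe_unitOfCoprime]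

/-! ### Letter-to-letter transducers -/

/-- `T` is synchronous, and `o` is its output function with values in the alphabet. -/
def IsLetter (T : Transducer n) (o : A n → T.Q → A n) : Prop := ∀ a q, T.out a q = [o a q]

section letter
variable {T : Transducer n} {o : A n → T.Q → A n}

lemma IsLetter.length_outs (h : IsLetter T o) (w : Word n) (q : T.Q) :
    (outs T w q).length = w.length := by
  induction w generalizing q with
  | nil => rfl
  | cons a w ih => simp [outs, h a q, ih]

lemma IsLetter.sl3 (h : IsLetter T o) : SL3 T := fun q w _ => h.length_outs w q

lemma IsLetter.circuits (h : IsLetter T o) : CircuitsNonempty T := by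
  intro q w hw _ e
  have := h.length_outs w q
  rw [e] at this
  exact hw (List.length_eq_zero_iff.1 this.symm)

lemma IsLetter.hmap_zero (h : IsLetter T o) (q : T.Q) (x : ℕ → A n) :
    hmap T q x 0 = o (x 0) q := by
  conv_lhs => rw [← scons_eta x, hmap_scons h.circuits, h]
  rfl

lemma IsLetter.hmap_succ (h : IsLetter T o) (q : T.Q) (x : ℕ → A n) (t : ℕ) :
    hmap T q x (t + 1) = hmap T (T.tr (x 0) q) (fun m => x (m + 1)) t := by
  conv_lhs => rw [← scons_eta x, hmap_scons h.circuits, h]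
  rfl

lemma IsLetter.hmap_dsts (h : IsLetter T o) (w : Word n) (q : T.Q) (x : ℕ → A n) (t : ℕ) :
    hmap T (dsts T w q) x t = hmap T q (sapp w x) (t + w.length) := by
  induction w generalizing q with
  | nil => rfl
  | cons a w ih =>
    rw [dsts, ih, List.length_cons, ← add_assoc, h.hmap_succ]
    rfl

end letter

lemma isLetter_prodT {T U : Transducer n} {o : A n → T.Q → A n} {o' : A n → U.Q → A n}
    (h : IsLetter T o) (h' : IsLetter U o') :
    IsLetter (prodT T U) (fun a p => o' (o a p.1) p.2) := by
  intro a p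
  simp [prodT, h a p.1, outs, h' (o a p.1) p.2]

lemma hmap_prodT {T U : Transducer n} {o : A n → T.Q → A n} {o' : A n → U.Q → A n}
    (h : IsLetter T o) (h' : IsLetter U o') (s : (prodT T U).Q) (x : ℕ → A n) :
    hmap (prodT T U) s x = hmap U s.2 (hmap T s.1 x) := by
  funext t
  induction t generalizing s x with
  | zero => rw [(isLetter_prodT h h').hmap_zero, h'.hmap_zero, h.hmap_zero]
  | succ t ih =>
    have e1 : ((prodT T U).tr (x 0) s).1 = T.tr (x 0) s.1 := rfl
    have e2 : ((prodT T U).tr (x 0) s).2 = U.tr (o (x 0) s.1) s.2 := by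
      change dsts U (T.out (x 0) s.1) s.2 = _
      rw [h]
      rfl
    have e3 : (fun m => hmap T s.1 x (m + 1)) = hmap T (T.tr (x 0) s.1) (fun m => x (m + 1)) :=
      funext fun m => h.hmap_succ _ _ _
    rw [(isLetter_prodT h h').hmap_succ, h'.hmap_succ, ih, e1, e2, e3, h.hmap_zero]

/-- The states of the core are closed under transitions. -/
lemma coreStateE_tr {T : Transducer n} {q : T.Q} (h : CoreStateE T q) (a : A n) :
    CoreStateE T (T.tr a q) := by
  rcases h with ⟨k, w, hk, hw, hq⟩ | h
  · refine Or.inl ⟨k + 1, w ++ [a], ?_, by simp [hw], fun p => ?_⟩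
    · intro v hv p q
      obtain ⟨u, b, rfl⟩ := List.eq_nil_or_concat v |>.resolve_left (by rintro rfl; simp at hv)
      simp only [List.concat_eq_append, List.length_append, List.length_singleton] at hv
      rw [List.concat_eq_append, dsts_append, dsts_append, hk u (by omega) p q]
    · rw [dsts_append, hq]; rfl
  · exact Or.inr h

lemma isLetter_coreT {T : Transducer n} {o : A n → T.Q → A n} (h : IsLetter T o) :
    IsLetter (coreT T) (fun a q => o a q.1) := fun a q => h a q.1

lemma hmap_coreT {T : Transducer n} {o : A n → T.Q → A n} (h : IsLetter T o)
    (q : (coreT T).Q) (x : ℕ → A n) : hmap (coreT T) q x = hmap T q.1 x := by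
  funext t
  induction t generalizing q x with
  | zero => rw [(isLetter_coreT h).hmap_zero, h.hmap_zero]
  | succ t ih =>
    rw [(isLetter_coreT h).hmap_succ, h.hmap_succ, ih]
    have hc := coreStateE_tr q.2 (x 0)
    have e0 : (coreT T).tr (x 0) q = (⟨T.tr (x 0) q.1, hc⟩ : {q // CoreStateE T q}) := dif_pos hc
    have e : ((coreT T).tr (x 0) q).1 = T.tr (x 0) q.1 := congrArg Subtype.val e0
    rw [e]

lemma hmap_of_copy {T : Transducer n} (h : ∀ a q, T.out a q = [a]) (q : T.Q) (x : ℕ → A n) :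
    hmap T q x = x := by
  have h' : IsLetter T (fun a _ => a) := h
  funext t
  induction t generalizing q x with
  | zero => exact h'.hmap_zero q x
  | succ t ih => rw [h'.hmap_succ, ih]

/-- If every state of `P` acts by putting a word of length `M` in front of the input, then
removing the incomplete response leaves outputs that copy the input letter, so that `P`
minimises to the identity. -/
lemma minRep_omegaEq_one {P : Transducer n} {o : A n → P.Q → A n} (h : IsLetter P o) (M : ℕ)
    (W : P.Q → ℕ → A n)
    (hP : ∀ q x t, hmap P q x t = if t < M then W q t else x (t - M)) :
    OmegaEq (minRep P) oneT := by
  have hdis : ∀ q, Disagree P q M := by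
    refine fun q => ⟨fun _ => 0, fun _ => 1, ?_⟩
    rw [hP, hP]
    simp
  have hext : ∀ q, extentLen P q = M := by
    intro q
    have hf : FiniteExtent P q := ⟨M, hdis q⟩
    unfold extentLen
    rw [dif_pos hf]
    classical
    refine (Nat.find_eq_iff hf).2 ⟨hdis q, ?_⟩
    rintro j hj ⟨x, y, hxy⟩
    rw [hP, hP, if_pos hj, if_pos hj] at hxy
    exact hxy rfl
  have hdrop : ∀ a q, (P.out a q ++ extentWord P (P.tr a q)).drop (extentLen P q) = [a] := by
    intro a q
    have e : P.out a q ++ extentWord P (P.tr a q) =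
        (List.range (M + 1)).map (hmap P q (scons a fun _ => default)) := by
      rw [List.range_succ_eq_map, List.map_cons, List.map_map, h.hmap_zero, h a q, extentWord,
        hext, List.singleton_append]
      congr 1
      refine List.map_congr_left fun i _ => ?_
      rw [Function.comp_apply, h.hmap_succ]
      rfl
    rw [hext, e, List.range_succ, List.map_append, List.drop_left' (by simp)]
    simp [hP]
  have hcopy : ∀ a q, (removeIncomplete P).out a q = [a] := by
    intro a q
    refine Eq.trans ?_ (hdrop a q)
    exact if_pos fun p => ⟨M, hdis p⟩
  have hcopy' : ∀ a q, (minRep P).out a q = [a] := fun a q => hcopy a _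
  have hsub : Subsingleton (minRep P).Q := by
    refine ⟨fun c d => ?_⟩
    induction c using Quotient.inductionOn
    induction d using Quotient.inductionOn
    refine Quotient.sound ?_
    funext x
    have hc : ∀ a q, (coreT (removeIncomplete P)).out a q = [a] := fun a q => hcopy a q.1
    rw [hmap_of_copy hc, hmap_of_copy hc]
  have hsub1 : Subsingleton (oneT : Transducer n).Q := inferInstanceAs (Subsingleton PUnit)
  refine ⟨⟨fun _ => PUnit.unit, fun _ => Classical.choice (minRep P).ne,
    fun _ => Subsingleton.elim _ _, fun _ => Subsingleton.elim _ _⟩, fun q => ?_⟩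
  funext x
  rw [hmap_of_copy hcopy', hmap_of_copy (T := oneT) fun _ _ => rfl]

/-! ### Delay transducers -/

section delay
variable {m : ℕ} {p : Fin m → ℕ}

/-- The alphabet being identified with `∏ i, Fin (p i)` through `e`, this transducer delays the
`i`-th coordinate of the input by `a i` steps. A state stores, for each `i`, the `a i` symbols of
the `i`-th coordinate that are still to be written, in order of writing. -/
def delay (e : A n ≃ ∀ i, Fin (p i)) (a : Fin m → ℕ) : Transducer n where
  Q := ∀ i, Fin (a i) → Fin (p i)
  fin := inferInstance
  ne := ⟨fun i _ => e default i⟩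
  tr := fun x q i j => if h : j.1 + 1 < a i then q i ⟨j.1 + 1, h⟩ else e x i
  out := fun x q => [e.symm fun i => if h : 0 < a i then q i ⟨0, h⟩ else e x i]

variable (e : A n ≃ ∀ i, Fin (p i)) (a : Fin m → ℕ)

lemma isLetter_delay : IsLetter (delay e a)
    (fun x q => e.symm fun i => if h : 0 < a i then q i ⟨0, h⟩ else e x i) := fun _ _ => rfl

lemma hmap_delay (q : (delay e a).Q) (x : ℕ → A n) (t : ℕ) (i : Fin m) :
    e (hmap (delay e a) q x t) i = if h : t < a i then q i ⟨t, h⟩ else e (x (t - a i)) i := by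
  induction t generalizing q x with
  | zero =>
    rw [(isLetter_delay e a).hmap_zero, Equiv.apply_symm_apply, Nat.zero_sub]
  | succ t ih =>
    rw [(isLetter_delay e a).hmap_succ, ih]
    change (if h : t < a i then (if h : t + 1 < a i then q i ⟨t + 1, h⟩ else e (x 0) i)
      else e (x (t - a i + 1)) i) = _
    rcases lt_trichotomy (t + 1) (a i) with h | h | h
    · rw [dif_pos (by omega), dif_pos h, dif_pos h]
    · rw [dif_pos (by omega), dif_neg (by omega), dif_neg (by omega)]
      rw [← h, Nat.sub_self]
    · rw [dif_neg (by omega), dif_neg (by omega), show t + 1 - a i = t - a i + 1 by omega]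

lemma delay_weaklyMinimal : WeaklyMinimal (delay e a) := by
  intro q r h
  funext i j
  have h1 := hmap_delay e a q default j i
  have h2 := hmap_delay e a r default j i
  rw [dif_pos j.2] at h1 h2
  rw [← h1, ← h2, h]

lemma delay_forced {K : ℕ} (hK : ∀ i, a i ≤ K) (w : Word n) (hw : w.length = K)
    (q : (delay e a).Q) (x : ℕ → A n) (t : ℕ) (i : Fin m) :
    e (hmap (delay e a) (dsts (delay e a) w q) x t) i = e (sapp w x (t + K - a i)) i := by
  have := hK i
  rw [(isLetter_delay e a).hmap_dsts, hw, hmap_delay, dif_neg (by omega)]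

lemma delay_sync {K : ℕ} (hK : ∀ i, a i ≤ K) : SyncAt (delay e a) K := by
  intro w hw q r
  refine delay_weaklyMinimal e a _ _ (funext fun x => funext fun t => e.injective ?_)
  funext i
  rw [delay_forced e a hK w hw, delay_forced e a hK w hw]

lemma delay_isCore : IsCore (delay e a) := by
  intro q
  set K := Finset.univ.sup a
  have hK : ∀ i, a i ≤ K := fun i => Finset.le_sup (Finset.mem_univ i)
  -- The symbol of coordinate `i` read at time `s` is written `s + a i - K` steps after time `K`.
  let y : ℕ → A n := fun s => e.symm fun i =>
    if h : s + a i - K < a i then q i ⟨s + a i - K, h⟩ else e default i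
  refine ⟨K, pre K y, delay_sync e a hK, pre_length K y, fun r => ?_⟩
  refine delay_weaklyMinimal e a _ _ (funext fun x => funext fun t => e.injective ?_)
  funext i
  have hi := hK i
  rw [delay_forced e a hK _ (pre_length K y), hmap_delay]
  rcases lt_or_ge t (a i) with h | h
  · have hs : t + K - a i < K := by omega
    have ht : t + K - a i + a i - K = t := by omega
    rw [dif_pos h, sapp_of_lt _ _ (by simpa using hs), List.getD_eq_getElem _ _ (by simpa using hs)]
    simp only [pre, List.getElem_map, List.getElem_range, y, Equiv.apply_symm_apply, ht]
    rw [dif_pos h]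
  · rw [dif_neg (by omega), sapp_of_ge _ _ (by simp; omega), pre_length,
      show t + K - a i - K = t - a i by omega]

lemma delay_injective (q : (delay e a).Q) : Function.Injective (hmap (delay e a) q) := by
  intro x y h
  funext s
  refine e.injective (funext fun i => ?_)
  have h1 := hmap_delay e a q x (s + a i) i
  have h2 := hmap_delay e a q y (s + a i) i
  rw [dif_neg (by omega), Nat.add_sub_cancel] at h1 h2
  rw [← h1, ← h2, h]

lemma mem_range_delay (q : (delay e a).Q) (y : ℕ → A n) :
    y ∈ Set.range (hmap (delay e a) q) ↔ ∀ i, ∀ j : Fin (a i), e (y j) i = q i j := by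
  constructor
  · rintro ⟨x, rfl⟩ i j
    rw [hmap_delay, dif_pos j.2]
  · intro h
    refine ⟨fun s => e.symm fun i => e (y (s + a i)) i, funext fun t => e.injective ?_⟩
    funext i
    rw [hmap_delay]
    split_ifs with ht
    · exact (h i ⟨t, ht⟩).symm
    · rw [Equiv.apply_symm_apply, Nat.sub_add_cancel (by omega)]

lemma delay_isClopen (q : (delay e a).Q) : IsClopen (Set.range (hmap (delay e a) q)) := by
  have : Set.range (hmap (delay e a) q) =
      ⋂ i, ⋂ j : Fin (a i), (fun y : ℕ → A n => y j) ⁻¹' {b | e b i = q i j} := by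
    ext y
    simp only [mem_range_delay, Set.mem_iInter]
    rfl
  rw [this]
  exact isClopen_iInter_of_finite fun i => isClopen_iInter_of_finite fun j =>
    (isClopen_discrete _).preimage (continuous_apply _)

/-- If some coordinate with at least two values is not delayed, then no state has incomplete
response. -/
lemma delay_SOn {i : Fin m} (hi : a i = 0) (hp : 2 ≤ p i) : SOnMem (delay e a) := by
  refine ⟨⟨(isLetter_delay e a).circuits,
    ⟨_, delay_sync e a fun i => Finset.le_sup (f := a) (Finset.mem_univ i)⟩, delay_isCore e a,
    Or.inl ⟨fun q => ?_, delay_weaklyMinimal e a⟩⟩,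
    fun q => ⟨delay_injective e a q, delay_isClopen e a q⟩⟩
  have := Fin.nontrivial_iff_two_le.2 hp
  obtain ⟨b, hb⟩ := exists_ne (e default i)
  refine ⟨fun _ => e.symm (Function.update (e default) i b), default, fun h => hb ?_⟩
  have h1 := hmap_delay e a q (fun _ => e.symm (Function.update (e default) i b)) 0 i
  have h2 := hmap_delay e a q default 0 i
  rw [dif_neg (by omega)] at h1 h2
  rw [h, h2] at h1
  simpa using h1.symm

/-- Complementary delays compose to a uniform delay of all coordinates, which is trivial in
`M_n`. -/
lemma delay_mul (b : Fin m → ℕ) {M : ℕ} (hM : ∀ i, a i + b i = M) :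
    OmegaEq (mulT (delay e a) (delay e b)) oneT := by
  have hP := isLetter_prodT (isLetter_delay e a) (isLetter_delay e b)
  refine minRep_omegaEq_one (isLetter_coreT hP) M
    (fun q => hmap (coreT (prodT (delay e a) (delay e b))) q default) fun q x t => ?_
  have key : ∀ x i, e (hmap (coreT (prodT (delay e a) (delay e b))) q x t) i =
      if h : t < b i then q.1.2 i ⟨t, h⟩ else
        if h : t - b i < a i then q.1.1 i ⟨t - b i, h⟩ else e (x (t - b i - a i)) i := by
    intro x i
    rw [hmap_coreT hP, hmap_prodT (isLetter_delay e a) (isLetter_delay e b), hmap_delay]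
    split_ifs with h1 h2
    · rfl
    · rw [hmap_delay, dif_pos h2]
    · rw [hmap_delay, dif_neg h2]
  refine e.injective (funext fun i => ?_)
  have hi := hM i
  split_ifs with ht
  · rw [key, key]
    split_ifs with h1 h2
    · rfl
    · rfl
    · omega
  · rw [key, dif_neg (by omega), dif_neg (by omega), Nat.sub_sub, add_comm, hi]

lemma delay_Ln {i : Fin m} (hi : a i = 0) (hp : ∀ i, 2 ≤ p i) : LnMem (delay e a) := by
  have hne : (Finset.univ : Finset (Fin m)).Nonempty := ⟨i, Finset.mem_univ i⟩
  obtain ⟨i₁, -, h₁⟩ := Finset.exists_max_image Finset.univ a hne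
  have hle : ∀ i, a i ≤ a i₁ := fun i => h₁ i (Finset.mem_univ i)
  refine ⟨⟨delay_SOn e a hi (hp i), delay e (fun i => a i₁ - a i),
    delay_SOn e _ (i := i₁) (Nat.sub_self _) (hp i₁), ?_, ?_⟩, (isLetter_delay e a).sl3⟩
  · exact delay_mul e a _ (M := a i₁) fun i => Nat.add_sub_cancel' (hle i)
  · exact delay_mul e _ a (M := a i₁) fun i => Nat.sub_add_cancel (hle i)

/-- The images of the maps `h_q` partition the space, and they all have the same measure since
the transducer is synchronous; hence each has measure `1 / |Q|`. -/
lemma sigT_delay : sigT (delay e a) * ∏ i, (p i : ZMod (n + 1)) ^ a i = 1 := by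
  have hloc : ∀ q, Loc (Set.range (hmap (delay e a) q)) :=
    fun q => loc_of_isClopen (delay_isClopen e a q)
  set q₀ := Classical.choice (delay e a).ne
  have hconst : ∀ q, mu (Set.range (hmap (delay e a) q)) =
      mu (Set.range (hmap (delay e a) q₀)) := by
    intro q
    have := mu_range_const (isLetter_delay e a).circuits (delay_isCore e a) (delay_injective e a)
      hloc (α := fun _ => 0) (fun x q => by simp [delay]) q q₀
    simpa using this
  let _ : Fintype (delay e a).Q := inferInstanceAs (Fintype (∀ i, Fin (a i) → Fin (p i)))
  have hcov : ⋃ q ∈ (Finset.univ : Finset (delay e a).Q), Set.range (hmap (delay e a) q) =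
      Set.univ := by
    refine Set.eq_univ_of_forall fun y => Set.mem_iUnion₂.2
      ⟨fun i j => e (y j) i, Finset.mem_univ _, ?_⟩
    exact (mem_range_delay e a _ y).2 fun _ _ => rfl
  have hsum : (1 : ℚ) = Fintype.card (delay e a).Q * mu (Set.range (hmap (delay e a) q₀)) := by
    rw [← mu_univ (n := n), ← hcov, mu_biUnion _ _ fun q _ => hloc q]
    · simp [hconst]
    · intro q _ r _ hqr
      rw [Set.disjoint_left]
      intro y hq hr
      refine hqr (funext fun i => funext fun j => ?_)
      rw [← (mem_range_delay e a q y).1 hq i j, (mem_range_delay e a r y).1 hr i j]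
  have hcard : Fintype.card (delay e a).Q = ∏ i, p i ^ a i := by
    change Fintype.card (∀ i, Fin (a i) → Fin (p i)) = _
    simp
  obtain ⟨k, hk⟩ := hloc q₀
  obtain ⟨c, hc⟩ := mu_integral hk
  have hnat : c * ∏ i, p i ^ a i = (n + 2) ^ k := by
    have : ((c * Fintype.card (delay e a).Q : ℕ) : ℚ) = (((n + 2) ^ k : ℕ) : ℚ) := by
      push_cast
      rw [hc]
      linear_combination (-(n + 2 : ℚ) ^ k) * hsum
    rw [← hcard]
    exact_mod_cast this
  have := congrArg (Nat.cast : ℕ → ZMod (n + 1)) hnat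
  push_cast at this
  rw [size_eq_one, one_pow, ← mq_cast (hloc q₀) hc] at this
  exact this

end delay

/-! ### Exponent vectors for the elements of the subgroup -/

section exponents
variable {m : ℕ} {p : Fin m → ℕ}

lemma exists_exponents_of_dvd {N : ℕ} (hN : N ≠ 0)
    (hp : ∀ r : ℕ, r.Prime → r ∣ N → ∃ i, p i = r) (d : ℕ) :
    d ∣ N → ∃ a : Fin m → ℕ, d = ∏ i, p i ^ a i := by
  induction d using induction_on_primes with
  | zero => exact fun h => absurd (zero_dvd_iff.1 h) hN
  | one => exact fun _ => ⟨0, by simp⟩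
  | prime_mul r d hr ih =>
    intro h
    obtain ⟨a, ha⟩ := ih ((Dvd.intro_left r rfl).trans h)
    obtain ⟨i, hi⟩ := hp r hr ((Dvd.intro d rfl).trans h)
    refine ⟨fun j => (if j = i then 1 else 0) + a j, ?_⟩
    simp only [pow_add, Finset.prod_mul_distrib, ← ha, pow_ite, pow_one, pow_zero,
      Finset.prod_ite_eq', Finset.mem_univ, if_true, hi]

lemma exists_exponents (hp : ∀ r : ℕ, r.Prime → r ∣ n + 2 → ∃ i, p i = r)
    {u : (ZMod (n + 1))ˣ} (hu : u ∈ divGroup n) :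
    ∃ a : Fin m → ℕ, (u : ZMod (n + 1)) = ∏ i, (p i : ZMod (n + 1)) ^ a i := by
  induction hu using Subgroup.closure_induction with
  | mem u hu =>
    obtain ⟨d, hd, hud⟩ := hu
    obtain ⟨a, ha⟩ := exists_exponents_of_dvd (by omega) hp d hd
    refine ⟨a, ?_⟩
    rw [hud, ha]
    push_cast
    rfl
  | one => exact ⟨0, by simp⟩
  | mul u v _ _ hu hv =>
    obtain ⟨a, ha⟩ := hu
    obtain ⟨b, hb⟩ := hv
    refine ⟨a + b, ?_⟩
    simp only [Units.val_mul, ha, hb, Pi.add_apply, pow_add, Finset.prod_mul_distrib]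
  | inv u _ hu =>
    obtain ⟨a, ha⟩ := hu
    -- In a finite group the inverse is a nonnegative power.
    have e : u⁻¹ = u ^ (Nat.card (ZMod (n + 1))ˣ - 1) := by
      rw [inv_eq_iff_mul_eq_one, ← pow_succ', Nat.sub_add_cancel Nat.card_pos, pow_card_eq_one']
    refine ⟨fun i => a i * (Nat.card (ZMod (n + 1))ˣ - 1), ?_⟩
    rw [e, Units.val_pow_eq_pow_val, ha, ← Finset.prod_pow]
    simp only [pow_mul]

/-- Subtracting a constant from all exponents divides the product by a power of
`∏ i, p i = n + 2 ≡ 1`. -/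
lemma exists_exponents_zero (hprod : ∏ i, p i = n + 2)
    (hp : ∀ r : ℕ, r.Prime → r ∣ n + 2 → ∃ i, p i = r)
    {u : (ZMod (n + 1))ˣ} (hu : u ∈ divGroup n) :
    ∃ a : Fin m → ℕ, (∃ i, a i = 0) ∧
      (u : ZMod (n + 1)) = ∏ i, (p i : ZMod (n + 1)) ^ a i := by
  obtain ⟨a, ha⟩ := exists_exponents hp hu
  have hne : (Finset.univ : Finset (Fin m)).Nonempty := by
    rw [Finset.nonempty_iff_ne_empty]
    intro h
    rw [h, Finset.prod_empty] at hprod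
    omega
  obtain ⟨i₀, -, h₀⟩ := Finset.exists_min_image Finset.univ a hne
  refine ⟨fun i => a i - a i₀, ⟨i₀, Nat.sub_self _⟩, ?_⟩
  have h1 : ∏ i, (p i : ZMod (n + 1)) = 1 := by
    rw [← Nat.cast_prod, hprod]
    push_cast
    exact size_eq_one n
  rw [ha]
  have h2 : ∀ i, (p i : ZMod (n + 1)) ^ a i =
      (p i : ZMod (n + 1)) ^ (a i - a i₀) * (p i : ZMod (n + 1)) ^ a i₀ := fun i => by
    rw [← pow_add, Nat.sub_add_cancel (h₀ i (Finset.mem_univ i))]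
  rw [Finset.prod_congr rfl fun i _ => h2 i, Finset.prod_mul_distrib, Finset.prod_pow, h1,
    one_pow, mul_one]

end exponents

/-- The image of the group `L_n` under the homomorphism
`sig : O_n → (ℤ/(n-1))^×` is exactly the subgroup of `(ℤ/(n-1))^×` generated by the
residues modulo `n - 1` of the divisors of `n`.  (For our alphabet of size `n + 2` the
modulus is `n + 1` and the divisors are those of `n + 2`.) -/
theorem sig_image_Ln (n : ℕ) :
    (∀ T : Transducer n, LnMem T →
      ∃ u ∈ Subgroup.closure
          {u : (ZMod (n + 1))ˣ | ∃ d : ℕ, d ∣ (n + 2) ∧ (u : ZMod (n + 1)) = (d : ℕ)},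
        (u : ZMod (n + 1)) = sigT T) ∧
    (∀ u ∈ Subgroup.closure
        {u : (ZMod (n + 1))ˣ | ∃ d : ℕ, d ∣ (n + 2) ∧ (u : ZMod (n + 1)) = (d : ℕ)},
      ∃ T : Transducer n, LnMem T ∧ sigT T = (u : ZMod (n + 1))) := by
  refine ⟨fun T hT => ?_, fun u hu => ?_⟩
  · obtain ⟨c, j, hc, h⟩ := exists_dvd_pow hT (Classical.choice T.ne)
    obtain ⟨u, hu, e⟩ := mem_divGroup_of_dvd_pow c j hc
    exact ⟨u, hu, e.trans h.symm⟩
  · let l := (n + 2).primeFactorsList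
    let p : Fin l.length → ℕ := l.get
    have hprod : ∏ i, p i = n + 2 := by
      rw [← List.prod_ofFn, List.ofFn_get]
      exact Nat.prod_primeFactorsList (by omega)
    have hpr : ∀ r : ℕ, r.Prime → r ∣ n + 2 → ∃ i, p i = r := fun r hr hd =>
      List.get_of_mem ((Nat.mem_primeFactorsList (by omega)).2 ⟨hr, hd⟩)
    have hp2 : ∀ i, 2 ≤ p i := fun i =>
      (Nat.prime_of_mem_primeFactorsList (List.get_mem l i)).two_le
    let e : A n ≃ ∀ i, Fin (p i) := (finCongr hprod.symm).trans finPiFinEquiv.symm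
    obtain ⟨a, ⟨i, hi⟩, ha⟩ := exists_exponents_zero hprod hpr (inv_mem hu)
    refine ⟨delay e a, delay_Ln e a hi hp2, ?_⟩
    have h1 := sigT_delay e a
    rw [← ha] at h1
    exact Units.mul_inv_eq_one.1 h1

end ShiftPaper
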